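/- arXiv:1707.08720 — 2 statements merged into one kernel-verified Lean document; each statement's English description precedes it below -/
import Mathlib

section
/- Every alternating partition λ can be obtained from the empty partition by a finite sequence of operations, each of which is either a widening W or a deepening D, in such a way that every intermediate partition in the sequence is again an alternating partition. -/
/-- The widening operation: add 1 to every part. -/
def Wop (l : List ℕ) : List ℕ := l.map (· + 1)

/-- The deepening operation: add 1 to every part and append a new part equal to 1. -/
def Dop (l : List ℕ) : List ℕ := l.map (· + 1) ++ [1]

/-- A strict partition (strictly decreasing positive parts) which is alternating:
consecutive parts have opposite parity. -/
def AlternatingPartition (l : List ℕ) : Prop :=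
  l.Chain' (· > ·) ∧ (∀ x ∈ l, 0 < x) ∧ l.Chain' (fun a b => Odd (a + b))

theorem pred_exists (L : List ℕ) (hL : AlternatingPartition L) (hne : L ≠ []) :
    ∃ L', AlternatingPartition L' ∧ (L = Wop L' ∨ L = Dop L') ∧ L'.sum < L.sum := by
  induction L with
  | nil => exact absurd rfl hne
  | cons a t ih =>
    cases t with
    | nil =>
      have ha : 0 < a := hL.2.1 a (by simp)
      obtain ⟨k, rfl⟩ : ∃ k, a = k + 1 := ⟨a - 1, by omega⟩
      rcases Nat.eq_zero_or_pos k with rfl | hk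
      · exact ⟨[], by simp [AlternatingPartition, List.Chain'], Or.inr (by simp [Dop]), by simp⟩
      · exact ⟨[k], by simpa [AlternatingPartition, List.Chain'] using hk,
          Or.inl (by simp [Wop]), by simp⟩
    | cons b u =>
      simp only [AlternatingPartition, List.Chain', List.isChain_cons_cons] at hL
      obtain ⟨⟨h1, h2⟩, h3, h4, h5⟩ := hL
      obtain ⟨k, rfl⟩ : ∃ k, a = k + 1 := ⟨a - 1, by omega⟩
      have hb : 0 < b := h3 b (by simp)
      obtain ⟨t', ⟨p1, p2, p3⟩, hor, hs⟩ :=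
        ih ⟨h2, fun x hx => h3 x (List.mem_cons_of_mem _ hx), h5⟩ (by simp)
      refine ⟨k :: t', ⟨?_, ?_, ?_⟩, ?_, ?_⟩
      · cases t' with
        | nil => simp [List.Chain']
        | cons c v =>
          have hc : b = c + 1 := by
            rcases hor with h | h <;> simp [Wop, Dop] at h <;> exact h.1
          refine List.isChain_cons_cons.2 ⟨?_, p1⟩
          omega
      · intro x hx
        rcases List.mem_cons.1 hx with rfl | hx
        · omega
        · exact p2 x hx
      · cases t' with
        | nil => simp [List.Chain']
        | cons c v =>
          have hc : b = c + 1 := by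
            rcases hor with h | h <;> simp [Wop, Dop] at h <;> exact h.1
          refine List.isChain_cons_cons.2 ⟨?_, p3⟩
          rw [Nat.odd_iff] at h4 ⊢
          omega
      · rcases hor with h | h
        · left; rw [h]; simp [Wop]
        · right; rw [h]; simp [Dop]
      · rw [List.sum_cons, List.sum_cons]; omega

/-- Every alternating partition can be obtained from the empty partition
by a finite sequence of widenings `W` and deepenings `D`, all of whose intermediate
partitions are alternating. -/
theorem stmt3 (L : List ℕ) (hL : AlternatingPartition L) :
    ∃ (q : ℕ) (seq : ℕ → List ℕ), seq 0 = [] ∧ seq q = L ∧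
      ∀ i < q, (seq (i + 1) = Wop (seq i) ∨ seq (i + 1) = Dop (seq i)) ∧
        AlternatingPartition (seq (i + 1)) := by
  induction hn : L.sum using Nat.strong_induction_on generalizing L with
  | _ n ih =>
    by_cases hne : L = []
    · exact ⟨0, fun _ => [], rfl, hne.symm, by simp⟩
    obtain ⟨L', h1, h2, h3⟩ := pred_exists L hL hne
    obtain ⟨q, s, s0, sq, hs⟩ := ih L'.sum (hn ▸ h3) L' h1 rfl
    refine ⟨q + 1, fun i => if i ≤ q then s i else L, by simp [s0], by simp, ?_⟩
    intro i hi
    rcases Nat.lt_or_ge i q with h | h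
    · have e1 : i + 1 ≤ q := h
      have e2 : i ≤ q := h.le
      simp only [e1, e2, if_true]
      exact hs i h
    · obtain rfl : i = q := by omega
      simp only [le_refl, if_true, Nat.not_succ_le_self, if_false, sq]
      exact ⟨h2, hL⟩
end

section
/- Define θ_j ∈ ℚ² by θ_j = (j + 1, −j) if j is even and θ_j = (−j, j + 1) if j is odd, and let β = (2, −2) if n is odd and β = (−2, 2) if n is even. Let b ∈ ℚ, n ≥ 1, and define hinge points P_u(n) by P_{2s}(n) = (b/(n − 2s + 1))·θ_{n−2s} and P_{2s+1}(n) = (b/(n − 2s))·θ_{n−2s}. Then for every s ≥ 0 with n − 2s ≥ 1: P_{2s}(n) + b·β = P_{2s+1}(n+1) and P_{2s+1}(n) + b·β = P_{2s+2}(n+1). -/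
/-- acting by `f_ε^b` translates hinge points by `b·β`: with
`θ_j = (j+1, −j)` for `j` even and `(−j, j+1)` for `j` odd, `β = (2, −2)` for `n`
odd and `(−2, 2)` for `n` even, and hinge points `P_{2s}(m) = (b/(m−2s+1))θ_{m−2s}`,
`P_{2s+1}(m) = (b/(m−2s))θ_{m−2s}`, one has `P_{2s}(n) + bβ = P_{2s+1}(n+1)` and
`P_{2s+1}(n) + bβ = P_{2s+2}(n+1)` whenever `n − 2s ≥ 1`. -/
theorem stmt9 (b : ℚ) (n : ℤ) (hn : 1 ≤ n) :
    let θ : ℤ → ℚ × ℚ := fun j =>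
      if Even j then ((j : ℚ) + 1, -(j : ℚ)) else (-(j : ℚ), (j : ℚ) + 1)
    let β : ℚ × ℚ := if Odd n then ((2 : ℚ), (-2 : ℚ)) else ((-2 : ℚ), (2 : ℚ))
    -- hinge points: `P m u` is `P_u(m)`
    let P : ℤ → ℤ → ℚ × ℚ := fun m u =>
      if Even u then (b / ((m - u + 1 : ℤ) : ℚ)) • θ (m - u)
      else (b / ((m - u + 1 : ℤ) : ℚ)) • θ (m - u + 1)
    ∀ s : ℕ, 1 ≤ n - 2 * (s : ℤ) →
      P n (2 * s) + b • β = P (n + 1) (2 * s + 1) ∧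
      P n (2 * s + 1) + b • β = P (n + 1) (2 * s + 2) := by
  intro θ β P s hs
  obtain ⟨j, rfl⟩ : ∃ j : ℤ, n = j + 2 * s := ⟨n - 2 * s, by ring⟩
  have hj : 1 ≤ j := by linarith
  have hj0 : (j : ℚ) ≠ 0 := by
    have : j ≠ 0 := by omega
    exact_mod_cast this
  have hj1 : (j : ℚ) + 1 ≠ 0 := by
    have : j + 1 ≠ 0 := by omega
    exact_mod_cast this
  have e0 : Even (2 * (s : ℤ)) := even_two_mul _
  have e1 : ¬ Even (2 * (s : ℤ) + 1) := by simp [parity_simps]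
  have e2 : Even (2 * (s : ℤ) + 2) := by simp [parity_simps]
  have a0 : j + 2 * (s : ℤ) - 2 * s = j := by ring
  have a1 : j + 2 * (s : ℤ) + 1 - (2 * s + 1) = j := by ring
  have a2 : j + 2 * (s : ℤ) - (2 * s + 1) + 1 = j := by ring
  have a3 : j + 2 * (s : ℤ) + 1 - (2 * s + 2) = j - 1 := by ring
  have a4 : j - 1 + 1 = j := by ring
  simp only [P, if_pos e0, if_neg e1, if_pos e2, a0, a1, a2, a3, a4]
  rcases Int.even_or_odd j with h | h
  · have o : ¬ Odd (j + 2 * (s : ℤ)) := by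
      rw [Int.not_odd_iff_even]; exact h.add e0
    have h1 : ¬ Even (j + 1) := by rw [Int.not_even_iff_odd]; exact h.add_one
    have h2 : ¬ Even (j - 1) := by rw [Int.not_even_iff_odd]; exact h.sub_odd odd_one
    simp only [θ, β, if_neg o, if_pos h, if_neg h1, if_neg h2]
    constructor <;> ext <;> simp <;> field_simp <;> ring
  · have o : Odd (j + 2 * (s : ℤ)) := h.add_even e0
    have h0 : ¬ Even j := by rwa [Int.not_even_iff_odd]
    have h1 : Even (j + 1) := h.add_one
    have h2 : Even (j - 1) := h.sub_odd odd_one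
    simp only [θ, β, if_pos o, if_neg h0, if_pos h1, if_pos h2]
    constructor <;> ext <;> simp <;> field_simp <;> ring
end
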